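/- arXiv:2410.10116 — 2 statements merged into one kernel-verified Lean document; each statement's English description precedes it below -/
import Mathlib

section
/- Forward action of the ternary purified permutation-function oracle. Let N ≥ 1 and ω₃ := exp(2πi/3). Let spfo be the unitary on ℓ²([N] × S_N × {0,1,2}^{[N]}) determined on the standard basis by spfo(δ_{(x,π,f)}) = ω₃^{f(x)} · δ_{(π(x),π,f)}. Let L, R be tuples of pairs in [N]×[N] of lengths ℓ, r with ℓ+r < N such that the concatenation L⌢R is bijective, and define pf_{L,R} ∈ ℓ²(S_N × {0,1,2}^{[N]}) by pf_{L,R}(π,f) := (1/√((N−ℓ−r)!)) · 𝟙[π(x)=y for every pair (x,y) occurring in L or R] · (1/√(3^N)) · ω₃^{Σ_{(x,y)∈L} f(x) − Σ_{(x,y)∈R} f(x)}. Then for every x ∈ [N] that does not occur as an x-coordinate of any pair in L or R: spfo(δ_x ⊗ pf_{L,R}) = (1/√(N−ℓ−r)) · Σ_{y∈[N], y not a y-coordinate of any pair in L or R} δ_y ⊗ pf_{L⌢(x,y), R}, where L⌢(x,y) is L with the pair (x,y) appended. -/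
/-!
The oracle permutes the standard basis up to phases, so its value at `(y, π, f)` is the phase
`ω₃ ^ f (π⁻¹ y)` times the value of its argument at `(π⁻¹ y, π, f)` (`spfo_apply`). On
`δ_x ⊗ pf_{L,R}` this is nonzero only if `π x = y` and `π` is compatible with `L` and `R`, that is,
if `π` is compatible with `L⌢(x,y)` and `R`. If `y` is already a `y`-coordinate of `L` or `R`, then
injectivity of `π` and freshness of `x` rule this out. Otherwise the phase `ω₃ ^ f x` supplies the
new summand in the exponent, and `(N-ℓ-r)! = (N-ℓ-r) · (N-ℓ-r-1)!` accounts for the normalisation.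
-/

open Finset

/-- `ω₃ = exp(2πi/3)`. -/
noncomputable def omega3 : ℂ := Complex.exp (2 * Real.pi * Complex.I / 3)

/-- The ternary pf-relation vector `pf_{L,R} ∈ ℓ²(S_N × {0,1,2}^{[N]})`:
`pf_{L,R}(π,f) = (1/√((N−ℓ−r)!)) · 𝟙[π x = y for all (x,y) in L or R] · (1/√(3^N)) ·
ω₃^{Σ_{(x,y)∈L} f(x) − Σ_{(x,y)∈R} f(x)}`. -/
noncomputable def pf3Vec (N ℓ r : ℕ) (L : Fin ℓ → Fin N × Fin N)
    (R : Fin r → Fin N × Fin N) :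
    Equiv.Perm (Fin N) × (Fin N → Fin 3) → ℂ :=
  fun q =>
    (Real.sqrt ((N - (ℓ + r)).factorial) : ℂ)⁻¹ *
      (if (∀ i, q.1 (L i).1 = (L i).2) ∧ (∀ j, q.1 (R j).1 = (R j).2) then 1 else 0) *
      (Real.sqrt (3 ^ N) : ℂ)⁻¹ *
      omega3 ^ ((∑ i, ((q.2 (L i).1 : ℕ) : ℤ)) - ∑ j, ((q.2 (R j).1 : ℕ) : ℤ))

/-- A tuple of pairs is bijective if its first coordinates are pairwise distinct and its
second coordinates are pairwise distinct. -/
def IsBijTuple {N t : ℕ} (p : Fin t → Fin N × Fin N) : Prop :=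
  Function.Injective (fun i => (p i).1) ∧ Function.Injective (fun i => (p i).2)

/-- The standard basis vector `δ_a` of `ℓ²(X)`. -/
def deltaVec {X : Type*} [DecidableEq X] (a : X) : X → ℂ :=
  fun b => if b = a then 1 else 0

theorem omega3_ne_zero : omega3 ≠ 0 := Complex.exp_ne_zero _

/-- Pointwise form of the oracle, obtained by expanding the argument in the standard basis. -/
theorem spfo_apply {N : ℕ}
    (T : ((Fin N × Equiv.Perm (Fin N) × (Fin N → Fin 3)) → ℂ) →ₗ[ℂ]
          ((Fin N × Equiv.Perm (Fin N) × (Fin N → Fin 3)) → ℂ))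
    (hT : ∀ (x' : Fin N) (π : Equiv.Perm (Fin N)) (f : Fin N → Fin 3),
      T (deltaVec (x', π, f)) = (omega3 ^ ((f x' : ℕ))) • deltaVec (π x', π, f))
    (v : (Fin N × Equiv.Perm (Fin N) × (Fin N → Fin 3)) → ℂ)
    (x : Fin N) (π : Equiv.Perm (Fin N)) (f : Fin N → Fin 3) :
    T v (π x, π, f) = omega3 ^ ((f x : ℕ)) * v (x, π, f) := by
  have hv : v = ∑ a, v a • deltaVec a := by
    funext b
    simp [deltaVec, Finset.sum_apply]
  conv_lhs => rw [hv]
  rw [map_sum, Finset.sum_apply, Finset.sum_eq_single (x, π, f)]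
  · rw [map_smul, hT]
    simp [deltaVec, mul_comm]
  · rintro ⟨x', π', f'⟩ - hne
    rw [map_smul, hT]
    have h : ¬ ((π x, π, f) = (π' x', π', f')) := by
      intro h
      simp only [Prod.mk.injEq] at h
      obtain ⟨h1, rfl, rfl⟩ := h
      exact hne (by rw [π.injective h1])
    simp [deltaVec, h]
  · simp

/-- The normalisation of `pf_{L,R}` is that of `pf_{L⌢(x,y),R}` times `1/√(N-ℓ-r)`. -/
theorem sqrt_factorial_step {N ℓ r : ℕ} (hlen : ℓ + r < N) :
    (Real.sqrt ((N - (ℓ + r)).factorial) : ℂ)⁻¹ =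
      (Real.sqrt (N - (ℓ + r)) : ℂ)⁻¹ * (Real.sqrt ((N - (ℓ + 1 + r)).factorial) : ℂ)⁻¹ := by
  obtain ⟨k, rfl⟩ : ∃ k, N = ℓ + r + k + 1 := ⟨N - (ℓ + r) - 1, by omega⟩
  have h1 : ℓ + r + k + 1 - (ℓ + r) = k + 1 := by omega
  have h2 : ℓ + r + k + 1 - (ℓ + 1 + r) = k := by omega
  have h3 : (((ℓ + r + k + 1 : ℕ) : ℝ) - (ℓ + r)) = ((k + 1 : ℕ) : ℝ) := by push_cast; ring
  rw [h1, h2, h3, Nat.factorial_succ, Nat.cast_mul, Real.sqrt_mul (Nat.cast_nonneg _),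
    Complex.ofReal_mul, mul_inv]

/-- **Forward action of the ternary purified permutation-function oracle.**
If `T` is the linear map determined on the standard basis of
`ℓ²([N] × S_N × {0,1,2}^{[N]})` by `T δ_{(x,π,f)} = ω₃^{f(x)} δ_{(π(x),π,f)}`, then for
tuples `L, R` with `ℓ + r < N` whose concatenation is bijective and every `x ∈ [N]` not
occurring as an x-coordinate in `L` or `R`,
`T (δ_x ⊗ pf_{L,R}) = (1/√(N−ℓ−r)) Σ_{y not a y-coordinate of L or R} δ_y ⊗ pf_{L⌢(x,y),R}`. -/
theorem spfo_forward_action (N ℓ r : ℕ) (hN : 1 ≤ N) (hlen : ℓ + r < N)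
    (L : Fin ℓ → Fin N × Fin N) (R : Fin r → Fin N × Fin N)
    (hbij : IsBijTuple (Fin.append L R))
    (x : Fin N) (hxL : ∀ i, (L i).1 ≠ x) (hxR : ∀ j, (R j).1 ≠ x)
    (T : ((Fin N × Equiv.Perm (Fin N) × (Fin N → Fin 3)) → ℂ) →ₗ[ℂ]
          ((Fin N × Equiv.Perm (Fin N) × (Fin N → Fin 3)) → ℂ))
    (hT : ∀ (x' : Fin N) (π : Equiv.Perm (Fin N)) (f : Fin N → Fin 3),
      T (deltaVec (x', π, f)) = (omega3 ^ ((f x' : ℕ))) • deltaVec (π x', π, f)) :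
    T (fun q => deltaVec x q.1 * pf3Vec N ℓ r L R q.2) =
      fun q => (Real.sqrt (N - (ℓ + r)) : ℂ)⁻¹ *
        (if (∃ i, (L i).2 = q.1) ∨ (∃ j, (R j).2 = q.1) then 0
         else pf3Vec N (ℓ + 1) r (Fin.snoc L (x, q.1)) R q.2) := by
  funext ⟨y, π, f⟩
  obtain ⟨z, rfl⟩ := π.surjective y
  rw [spfo_apply T hT]
  by_cases hz : z = x
  · subst hz
    simp only [deltaVec, if_true, one_mul]
    split_ifs with h
    · -- `π z` is already a `y`-coordinate, so `π` cannot be compatible with `L` and `R`.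
      have hc : ¬ ((∀ i, π (L i).1 = (L i).2) ∧ (∀ j, π (R j).1 = (R j).2)) := by
        rintro ⟨hL, hR⟩
        rcases h with ⟨i, hi⟩ | ⟨j, hj⟩
        · exact hxL i (π.injective ((hL i).trans hi))
        · exact hxR j (π.injective ((hR j).trans hj))
      simp [pf3Vec, hc]
    · simp only [pf3Vec, Fin.forall_fin_succ', Fin.sum_univ_castSucc, Fin.snoc_castSucc,
        Fin.snoc_last, and_true]
      rw [sqrt_factorial_step hlen, add_sub_right_comm, zpow_add₀ omega3_ne_zero, zpow_natCast]
      ring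
  · have h : ¬ (π x = π z) := fun h => hz (π.injective h).symm
    simp [deltaVec, hz, pf3Vec, Fin.forall_fin_succ', h]
end

section
/- Two-design twirling bound. Let N ≥ 1 and let ℓ, r ≥ 0 be integers. On the space H := ℂ^N ⊗ (ℂ^N⊗ℂ^N)^{⊗ℓ} ⊗ (ℂ^N⊗ℂ^N)^{⊗r} (registers: the query register A, then ℓ 'L-slots' and r 'R-slots', each slot consisting of an x-factor and a y-factor), for i ∈ [ℓ] let Π^eq_{L,i} := Σ_{u∈[N]} |e_u⟩⟨e_u|_A ⊗ |e_u⟩⟨e_u| on the x-factor of the i-th L-slot (identity elsewhere); for i ∈ [r] let Π^eq_{R,i} be the analogous equality projector between A and the x-factor of the i-th R-slot, and let Π^EPR_{R,i} := |EPR⟩⟨EPR| between A and the x-factor of the i-th R-slot (identity elsewhere), where EPR := (1/√N) Σ_{u∈[N]} e_u⊗e_u. For unitaries C, D ∈ U(N), let T[C,D] := C_A ⊗ (C⊗D^T)^{⊗ℓ} ⊗ (C̄⊗D^†)^{⊗r}, where C̄ is the entrywise conjugate, D^T the transpose, and D^† the conjugate transpose. Then ‖ ∫∫ T[C,D]^†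 · ( Σ_{i∈[ℓ]} Π^eq_{L,i} + Σ_{i∈[r]} (Π^eq_{R,i} − Π^EPR_{R,i}) ) · T[C,D] dμ(C) dμ(D) ‖ ≤ (2ℓ + r)/(N+1), where μ is the normalized Haar probability measure on U(N) and ‖·‖ is the operator norm. -/
/-!
The factors of `T[C,D]` on registers not touched by a given projector are unitary, so conjugating
that projector by `T[C,D]` only sees the query register and one x-factor: `C ⊗ C` for an L-slot,
`C ⊗ C̄` for an R-slot. In particular the result does not depend on `D`. The two-register
conjugates have as entries the fourth-order row moments
`∑ u, conj C_ua * conj C_ub * C_uc * C_ud` (`sandwich_L`, `sandwich_R`), and the EPR projector is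
fixed by `C ⊗ C̄` (`sandwich_EPR`).

The Haar average of these moments is `(δ_ac δ_bd + δ_ad δ_bc) / (N + 1)` (`moment_eq`). It follows
from right invariance: diagonal phases kill all moments with `{a,b} ≠ {c,d}`, a square root of the
swap unitary on two columns shows `E|z_a|⁴ = 2 E|z_a|²|z_b|²`, and the normalization of the rows
fixes the constant. Right invariance itself follows from left invariance by a Fubini argument
(`right_invariant`).

Hence each L-term averages to `2/(N+1)` times the projector onto the symmetric subspace, and each
R-term to `(I + N·EPR)/(N+1) - EPR = (I - EPR)/(N+1)`. Orthogonal projectors have norm at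
most one, and the triangle inequality over the slots gives the bound.
-/

open Finset MeasureTheory
open scoped Matrix

noncomputable instance matrixMeasurableSpace {m n : Type*} : MeasurableSpace (Matrix m n ℂ) :=
  (inferInstance : MeasurableSpace (m → n → ℂ))

/-- The `ℓ²` operator norm of a complex matrix. -/
noncomputable def opNorm {ι : Type*} [Fintype ι] [DecidableEq ι] (M : Matrix ι ι ℂ) : ℝ :=
  ‖(Matrix.toEuclideanCLM (𝕜 := ℂ) M : EuclideanSpace ℂ ι →L[ℂ] EuclideanSpace ℂ ι)‖

/-- Index of the space `ℂ^N ⊗ (ℂ^N⊗ℂ^N)^{⊗ℓ} ⊗ (ℂ^N⊗ℂ^N)^{⊗r}`: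
the query register `A`, the `ℓ` L-slots and the `r` R-slots. -/
abbrev RegIdx (N ℓ r : ℕ) := Fin N × (Fin ℓ → Fin N × Fin N) × (Fin r → Fin N × Fin N)

/-- The equality projector `Π^eq_{L,i}` between the query register and the x-factor of
the `i`-th L-slot, identity elsewhere. -/
noncomputable def eqProjL (N ℓ r : ℕ) (i : Fin ℓ) :
    Matrix (RegIdx N ℓ r) (RegIdx N ℓ r) ℂ :=
  Matrix.of fun p q =>
    if p.1 = q.1 ∧ (p.2.1 i).1 = p.1 ∧ (q.2.1 i).1 = p.1 ∧ (p.2.1 i).2 = (q.2.1 i).2 ∧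
        (∀ j, j ≠ i → p.2.1 j = q.2.1 j) ∧ p.2.2 = q.2.2
    then 1 else 0

/-- The equality projector `Π^eq_{R,i}` between the query register and the x-factor of
the `i`-th R-slot, identity elsewhere. -/
noncomputable def eqProjR (N ℓ r : ℕ) (i : Fin r) :
    Matrix (RegIdx N ℓ r) (RegIdx N ℓ r) ℂ :=
  Matrix.of fun p q =>
    if p.1 = q.1 ∧ (p.2.2 i).1 = p.1 ∧ (q.2.2 i).1 = p.1 ∧ (p.2.2 i).2 = (q.2.2 i).2 ∧
        (∀ j, j ≠ i → p.2.2 j = q.2.2 j) ∧ p.2.1 = q.2.1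
    then 1 else 0

/-- The projector `Π^EPR_{R,i} = |EPR⟩⟨EPR|` between the query register and the x-factor
of the `i`-th R-slot, identity elsewhere, where `EPR = (1/√N) Σ_u e_u ⊗ e_u`. -/
noncomputable def eprProjR (N ℓ r : ℕ) (i : Fin r) :
    Matrix (RegIdx N ℓ r) (RegIdx N ℓ r) ℂ :=
  Matrix.of fun p q =>
    if (p.2.2 i).1 = p.1 ∧ (q.2.2 i).1 = q.1 ∧ (p.2.2 i).2 = (q.2.2 i).2 ∧
        (∀ j, j ≠ i → p.2.2 j = q.2.2 j) ∧ p.2.1 = q.2.1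
    then (N : ℂ)⁻¹ else 0

/-- The twirling operator `T[C,D] = C_A ⊗ (C⊗Dᵀ)^{⊗ℓ} ⊗ (C̄⊗D†)^{⊗r}`, written
entrywise. -/
noncomputable def twirlOp (N ℓ r : ℕ) (C D : Matrix (Fin N) (Fin N) ℂ) :
    Matrix (RegIdx N ℓ r) (RegIdx N ℓ r) ℂ :=
  Matrix.of fun p q =>
    C p.1 q.1 *
      (∏ j, (C (p.2.1 j).1 (q.2.1 j).1 * D (q.2.1 j).2 (p.2.1 j).2)) *
      (∏ j, ((starRingEnd ℂ) (C (p.2.2 j).1 (q.2.2 j).1) *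
        (starRingEnd ℂ) (D (q.2.2 j).2 (p.2.2 j).2)))

open scoped Kronecker

/-! ### Fourth moments of a Haar unitary -/

section Haar
variable {N : ℕ}

local notation "𝒰" N => Matrix.unitaryGroup (Fin N) ℂ

lemma measurable_entry (a b : Fin N) :
    Measurable fun C : 𝒰 N => (C : Matrix (Fin N) (Fin N) ℂ) a b := by
  have h : Measurable fun C : 𝒰 N => (fun i j => (C : Matrix (Fin N) (Fin N) ℂ) i j) :=
    measurable_subtype_coe
  exact measurable_pi_iff.1 (measurable_pi_iff.1 h a) b

lemma measurable_unitary_of_entries {X : Type*} [MeasurableSpace X] (f : X → 𝒰 N)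
    (h : ∀ a b, Measurable fun x => (f x : Matrix (Fin N) (Fin N) ℂ) a b) : Measurable f := by
  refine Measurable.subtype_mk (f := fun x => (f x : Matrix (Fin N) (Fin N) ℂ)) ?_
  exact measurable_pi_iff.2 fun a => measurable_pi_iff.2 fun b => h a b

instance unitary_measurableMul₂ : MeasurableMul₂ (𝒰 N) where
  measurable_mul := by
    refine measurable_unitary_of_entries _ fun a b => ?_
    simp only [Matrix.UnitaryGroup.mul_apply, Matrix.mul_apply]
    exact Finset.measurable_sum _ fun k _ =>
      ((measurable_entry a k).comp measurable_fst).mul ((measurable_entry k b).comp measurable_snd)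

instance unitary_measurableInv : MeasurableInv (𝒰 N) where
  measurable_inv := by
    refine measurable_unitary_of_entries _ fun a b => ?_
    simp only [Matrix.UnitaryGroup.inv_apply, Matrix.star_apply]
    exact (continuous_star.measurable).comp (measurable_entry b a)

/-- A left-invariant probability measure `μ` is right-invariant: integrating `f (x * y)` over
`μ⁻¹ × μ` in the two possible orders gives `∫ f dμ = ∫ f dμ⁻¹`, so `μ` equals the right-invariant
measure `μ⁻¹`. -/
lemma right_invariant {G : Type*} [Group G] [MeasurableSpace G] [MeasurableMul₂ G]
    [MeasurableInv G] (μ : Measure G) [IsProbabilityMeasure μ] [μ.IsMulLeftInvariant] :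
    μ.IsMulRightInvariant := by
  have hp : IsProbabilityMeasure μ.inv := by
    unfold Measure.inv
    exact Measure.isProbabilityMeasure_map measurable_inv.aemeasurable
  have h : μ = μ.inv := by
    refine Measure.ext_of_lintegral _ fun f hf => ?_
    have h1 : ∫⁻ x, ∫⁻ y, f (x * y) ∂μ ∂μ.inv = ∫⁻ y, f y ∂μ := by
      simp [lintegral_mul_left_eq_self]
    have h2 : ∫⁻ y, ∫⁻ x, f (x * y) ∂μ.inv ∂μ = ∫⁻ x, f x ∂μ.inv := by
      simp [lintegral_mul_right_eq_self]
    rw [← h1, ← h2]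
    exact lintegral_lintegral_swap (hf.comp measurable_mul).aemeasurable
  rw [h]
  infer_instance

/-- The fourth-order monomial `conj C_ua * conj C_ub * C_uc * C_ud`, summed over the row `u`. -/
def fourth (C : Matrix (Fin N) (Fin N) ℂ) (a b c d : Fin N) : ℂ :=
  ∑ u, star (C u a) * star (C u b) * C u c * C u d

lemma integrable_fourth (μ : Measure (𝒰 N)) [IsProbabilityMeasure μ] (a b c d : Fin N) :
    Integrable (fun C : 𝒰 N => fourth (C : Matrix (Fin N) (Fin N) ℂ) a b c d) μ := by
  unfold fourth
  refine integrable_finsetSum _ fun u _ => ?_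
  have hs : ∀ a : Fin N, Measurable fun C : 𝒰 N => star ((C : Matrix (Fin N) (Fin N) ℂ) u a) :=
    fun a => continuous_star.measurable.comp (measurable_entry u a)
  refine Integrable.of_bound (C := 1) ((((hs a).mul (hs b)).mul (measurable_entry u c)).mul
    (measurable_entry u d)).aestronglyMeasurable (ae_of_all _ fun C => ?_)
  have hb : ∀ a, ‖(C : Matrix (Fin N) (Fin N) ℂ) u a‖ ≤ 1 := fun a =>
    entry_norm_bound_of_unitary C.2 u a
  simp only [norm_mul, norm_star]
  exact mul_le_one₀ (mul_le_one₀ (mul_le_one₀ (hb a) (norm_nonneg _) (hb b)) (norm_nonneg _)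
    (hb c)) (norm_nonneg _) (hb d)

/-- The `μ`-average of `fourth`. -/
noncomputable def moment (μ : Measure (𝒰 N)) (a b c d : Fin N) : ℂ :=
  ∫ C : 𝒰 N, fourth (C : Matrix (Fin N) (Fin N) ℂ) a b c d ∂μ

lemma moment_mul (μ : Measure (𝒰 N)) [μ.IsMulRightInvariant] (V : 𝒰 N) (a b c d : Fin N) :
    ∫ C : 𝒰 N, fourth ((C : Matrix (Fin N) (Fin N) ℂ) * (V : Matrix (Fin N) (Fin N) ℂ)) a b c d ∂μ
      = moment μ a b c d :=
  integral_mul_right_eq_self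
    (fun C : 𝒰 N => fourth (C : Matrix (Fin N) (Fin N) ℂ) a b c d) V

/-- Invariance under right multiplication by the diagonal unitary with entry `i` at `k` and `1`
elsewhere. -/
lemma moment_phase (μ : Measure (𝒰 N)) [μ.IsMulRightInvariant] (k a b c d : Fin N) :
    (star (if a = k then Complex.I else 1) * star (if b = k then Complex.I else 1) *
      (if c = k then Complex.I else 1) * (if d = k then Complex.I else 1)) * moment μ a b c d
      = moment μ a b c d := by
  let φ : Fin N → ℂ := fun j => if j = k then Complex.I else 1
  have hV : Matrix.diagonal φ ∈ Matrix.unitaryGroup (Fin N) ℂ := by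
    rw [Matrix.mem_unitaryGroup_iff, Matrix.star_eq_conjTranspose, Matrix.diagonal_conjTranspose,
      Matrix.diagonal_mul_diagonal, ← Matrix.diagonal_one]
    congr 1
    funext j
    by_cases h : j = k <;> simp [φ, h]
  have h := moment_mul μ ⟨_, hV⟩ a b c d
  refine Eq.trans ?_ h
  unfold moment
  rw [← integral_const_mul]
  congr 1
  funext C
  simp only [fourth, Matrix.mul_diagonal, star_mul', Finset.mul_sum]
  refine Finset.sum_congr rfl fun u _ => ?_
  simp only [φ]
  ring

lemma moment_eq_zero (μ : Measure (𝒰 N)) [μ.IsMulRightInvariant] {a b c d : Fin N}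
    (h : ¬ ((a = c ∧ b = d) ∨ (a = d ∧ b = c))) : moment μ a b c d = 0 := by
  have key : ∀ k : Fin N, (star (if a = k then Complex.I else 1) *
      star (if b = k then Complex.I else 1) *
      (if c = k then Complex.I else 1) * (if d = k then Complex.I else (1 : ℂ))) ≠ 1 →
      moment μ a b c d = 0 := fun k hk => by
    by_contra h0
    exact hk (mul_right_cancel₀ h0 ((moment_phase μ k a b c d).trans (one_mul _).symm))
  have hI : Complex.I ≠ 1 := fun h => by simpa using congrArg Complex.re h
  have hI' : -Complex.I ≠ 1 := fun h => by simpa using congrArg Complex.re h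
  have h1 : (-1 : ℂ) ≠ 1 := by norm_num
  by_cases hab : (a ≠ c ∧ a ≠ d)
  · apply key a
    rw [if_neg hab.1.symm, if_neg hab.2.symm]
    split_ifs <;> simp_all
  · apply key b
    split_ifs <;> simp_all

/-- Invariance under the square-root-of-swap `V = ((1 + i) I + (1 - i) S) / 2`, where `S`
exchanges columns `a` and `b`. Of the sixteen monomials in the expansion of the fourth moment of
the mixed column, only those with matching index pairs survive. -/
lemma moment_mix (μ : Measure (𝒰 N)) [IsProbabilityMeasure μ] [μ.IsMulRightInvariant]
    {a b : Fin N} (hab : a ≠ b) :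
    4 * moment μ a a a a = moment μ a a a a + moment μ b b b b + 4 * moment μ a b a b := by
  let p : ℂ := (1 + Complex.I) / 2
  let q : ℂ := (1 - Complex.I) / 2
  let σ := Equiv.swap a b
  let P : Matrix (Fin N) (Fin N) ℂ := (1 : Matrix (Fin N) (Fin N) ℂ).submatrix id σ
  have hP : ∀ M : Matrix (Fin N) (Fin N) ℂ, M * P = M.submatrix id σ := fun M => by
    ext i j
    simp [P, Matrix.mul_apply, Matrix.one_apply]
  have hPs : Pᴴ = P := by
    ext i j
    simp only [P, Matrix.conjTranspose_apply, Matrix.submatrix_apply, id, Matrix.one_apply]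
    have : (j = σ i) ↔ (i = σ j) := by
      constructor <;> (rintro rfl; simp [σ])
    simp [this]
  have hPP : P * P = 1 := by
    rw [hP]; ext i j; simp [P, σ, Matrix.one_apply]
  have hp : star p = q := by simp [p, q, sub_eq_add_neg]
  have hq : star q = p := by simp [p, q]
  have hI := Complex.I_mul_I
  have hV : p • (1 : Matrix (Fin N) (Fin N) ℂ) + q • P ∈ Matrix.unitaryGroup (Fin N) ℂ := by
    rw [Matrix.mem_unitaryGroup_iff, Matrix.star_eq_conjTranspose, Matrix.conjTranspose_add,
      Matrix.conjTranspose_smul, Matrix.conjTranspose_smul, hPs, Matrix.conjTranspose_one, hp, hq,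
      add_mul, mul_add, mul_add]
    simp only [smul_mul_smul_comm, hPP, mul_one, one_mul]
    have e1 : p * q + q * p = 1 := by simp only [p, q]; linear_combination (-1/2 : ℂ) * hI
    have e2 : p * p + q * q = 0 := by simp only [p, q]; linear_combination (1/2 : ℂ) * hI
    calc _ = (p * q + q * p) • (1 : Matrix (Fin N) (Fin N) ℂ) + (p * p + q * q) • P := by
          module
      _ = 1 := by rw [e1, e2]; simp
  -- Column `a` of `C * V` is `∑ k, c k * C _ (ix k)`, the sum running over two values of `k`.
  let c : Bool → ℂ := fun k => cond k p q
  let ix : Bool → Fin N := fun k => cond k a b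
  have h := moment_mul μ ⟨_, hV⟩ a a a a
  have hexp : ∀ C : Matrix (Fin N) (Fin N) ℂ,
      fourth (C * (p • (1 : Matrix (Fin N) (Fin N) ℂ) + q • P)) a a a a =
      ∑ k₁, ∑ k₂, ∑ k₃, ∑ k₄, (star (c k₁) * star (c k₂) * c k₃ * c k₄) *
        fourth C (ix k₁) (ix k₂) (ix k₃) (ix k₄) := by
    intro C
    have hz : ∀ u, (C * (p • (1 : Matrix (Fin N) (Fin N) ℂ) + q • P)) u a
        = p * C u a + q * C u b := fun u => by
      rw [mul_add, Matrix.mul_smul, Matrix.mul_smul, hP]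
      simp [σ]
    simp only [fourth, hz, Fintype.sum_bool, c, ix, cond_true, cond_false, Finset.mul_sum,
      ← Finset.sum_add_distrib, star_add, star_mul']
    refine Finset.sum_congr rfl fun u _ => ?_
    ring
  have hexpand : moment μ a a a a = ∑ k₁, ∑ k₂, ∑ k₃, ∑ k₄, (star (c k₁) * star (c k₂) * c k₃ * c k₄) *
        moment μ (ix k₁) (ix k₂) (ix k₃) (ix k₄) := by
    rw [← h]
    simp only [hexp]
    have hi := fun k₁ k₂ k₃ k₄ => (integrable_fourth μ (ix k₁) (ix k₂) (ix k₃) (ix k₄)).const_mul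
      (star (c k₁) * star (c k₂) * c k₃ * c k₄)
    rw [integral_finsetSum _ fun k₁ _ => integrable_finsetSum _ fun k₂ _ =>
      integrable_finsetSum _ fun k₃ _ => integrable_finsetSum _ fun k₄ _ => hi k₁ k₂ k₃ k₄]
    refine Finset.sum_congr rfl fun k₁ _ => ?_
    rw [integral_finsetSum _ fun k₂ _ =>
      integrable_finsetSum _ fun k₃ _ => integrable_finsetSum _ fun k₄ _ => hi k₁ k₂ k₃ k₄]
    refine Finset.sum_congr rfl fun k₂ _ => ?_
    rw [integral_finsetSum _ fun k₃ _ => integrable_finsetSum _ fun k₄ _ => hi k₁ k₂ k₃ k₄]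
    refine Finset.sum_congr rfl fun k₃ _ => ?_
    rw [integral_finsetSum _ fun k₄ _ => hi k₁ k₂ k₃ k₄]
    exact Finset.sum_congr rfl fun k₄ _ => integral_const_mul _ _
  have hsym1 : moment μ a b b a = moment μ a b a b := by
    unfold moment fourth; congr 1; funext C; refine Finset.sum_congr rfl fun u _ => ?_; ring
  have hsym2 : moment μ b a b a = moment μ a b a b := by
    unfold moment fourth; congr 1; funext C; refine Finset.sum_congr rfl fun u _ => ?_; ring
  have hsym3 : moment μ b a a b = moment μ a b a b := by
    unfold moment fourth; congr 1; funext C; refine Finset.sum_congr rfl fun u _ => ?_; ring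
  have z : ∀ {w x y z : Fin N}, ¬ ((w = y ∧ x = z) ∨ (w = z ∧ x = y)) → moment μ w x y z = 0 :=
    fun h => moment_eq_zero μ h
  have hpq : p * q = 1 / 2 := by simp only [p, q]; linear_combination (-1/4 : ℂ) * hI
  simp only [Fintype.sum_bool, c, ix, cond_true, cond_false, hp, hq] at hexpand
  rw [z (w := a) (x := a) (y := a) (z := b) (by simp [hab]),
    z (w := a) (x := a) (y := b) (z := a) (by simp [hab]),
    z (w := a) (x := a) (y := b) (z := b) (by simp [hab]),
    z (w := a) (x := b) (y := a) (z := a) (by simp [hab.symm]),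
    z (w := a) (x := b) (y := b) (z := b) (by simp [hab]),
    z (w := b) (x := a) (y := a) (z := a) (by simp [hab.symm]),
    z (w := b) (x := a) (y := b) (z := b) (by simp [hab]),
    z (w := b) (x := b) (y := a) (z := a) (by simp [hab.symm]),
    z (w := b) (x := b) (y := a) (z := b) (by simp [hab.symm]),
    z (w := b) (x := b) (y := b) (z := a) (by simp [hab.symm]), hsym1, hsym2, hsym3] at hexpand
  have hpq2 : p * q * (p * q) = 1 / 4 := by rw [hpq]; norm_num
  linear_combination 4 * hexpand + 4 * (moment μ a a a a + moment μ b b b b + 4 * moment μ a b a b) *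
    hpq2

/-- The fourth moment formula for Haar unitaries, in the row-summed form. -/
lemma moment_eq (hN : 1 ≤ N) (μ : Measure (𝒰 N)) [IsProbabilityMeasure μ]
    [μ.IsMulRightInvariant] (a b c d : Fin N) :
    moment μ a b c d = ((if a = c ∧ b = d then 1 else 0) + (if a = d ∧ b = c then 1 else 0)) /
      ((N : ℂ) + 1) := by
  have hsym : ∀ a b, moment μ a b b a = moment μ a b a b := fun a b => by
    unfold moment fourth; congr 1; funext C; refine Finset.sum_congr rfl fun u _ => ?_; ring
  have hsym' : ∀ a b, moment μ b a b a = moment μ a b a b := fun a b => by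
    unfold moment fourth; congr 1; funext C; refine Finset.sum_congr rfl fun u _ => ?_; ring
  let a₀ : Fin N := ⟨0, hN⟩
  have hα : ∀ a, moment μ a a a a = moment μ a₀ a₀ a₀ a₀ := fun a => by
    by_cases h : a = a₀
    · rw [h]
    · have h1 := moment_mix μ h
      have h2 := moment_mix μ (Ne.symm h)
      rw [hsym' a a₀] at h2
      linear_combination (h1 - h2) / 4
  set α := moment μ a₀ a₀ a₀ a₀ with hαdef
  -- With all `moment a a a a` equal to `α`, the mixing identity forces the off-diagonal value.
  have hβ : ∀ a b, a ≠ b → moment μ a b a b = α / 2 := fun a b h => by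
    have h1 := moment_mix μ h
    rw [hα a, hα b] at h1
    linear_combination - h1 / 4
  have hab : ∀ a b, moment μ a b a b = α / 2 + if a = b then α / 2 else 0 := fun a b => by
    split_ifs with h
    · subst h; rw [hα a]; ring
    · rw [hβ a b h]; ring
  -- The rows of a unitary are unit vectors, which normalizes the moments.
  have htot : ∑ a, ∑ b, moment μ a b a b = N := by
    unfold moment
    simp_rw [← integral_finsetSum _ fun b _ => integrable_fourth μ _ b _ b]
    rw [← integral_finsetSum _ fun a _ => integrable_finsetSum _ fun b _ =>
      integrable_fourth μ a b a b]
    have : ∀ C : 𝒰 N, ∑ a, ∑ b, fourth (C : Matrix (Fin N) (Fin N) ℂ) a b a b = N := fun C => by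
      have hrow : ∀ u, ∑ a, (C : Matrix (Fin N) (Fin N) ℂ) u a *
          star ((C : Matrix (Fin N) (Fin N) ℂ) u a) = 1 := fun u => by
        have := congrFun (congrFun (Matrix.mem_unitaryGroup_iff.1 C.2) u) u
        simpa [Matrix.mul_apply] using this
      unfold fourth
      calc _ = ∑ u, (∑ a, (C : Matrix (Fin N) (Fin N) ℂ) u a *
          star ((C : Matrix (Fin N) (Fin N) ℂ) u a)) * (∑ a, (C : Matrix (Fin N) (Fin N) ℂ) u a *
          star ((C : Matrix (Fin N) (Fin N) ℂ) u a)) := by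
            simp_rw [Finset.sum_mul_sum]
            have hc : ∀ F : Fin N → Fin N → Fin N → ℂ,
                ∑ a, ∑ b, ∑ u, F a b u = ∑ u, ∑ a, ∑ b, F a b u := fun F => by
              rw [Finset.sum_comm]
              simp_rw [Finset.sum_comm (f := fun a u => F a _ u)]
              rw [Finset.sum_comm]
              refine Finset.sum_congr rfl fun u _ => Finset.sum_comm
            rw [hc]
            refine Finset.sum_congr rfl fun u _ => Finset.sum_congr rfl fun a _ =>
              Finset.sum_congr rfl fun b _ => ?_
            ring
        _ = N := by simp only [hrow]; simp
    simp [this]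
  have hN1 : (N : ℂ) + 1 ≠ 0 := by exact_mod_cast Nat.succ_ne_zero N
  have hN0 : (N : ℂ) ≠ 0 := by exact_mod_cast (by omega : N ≠ 0)
  have hval : α / 2 = 1 / ((N : ℂ) + 1) := by
    simp only [hab, Finset.sum_add_distrib, Finset.sum_ite_eq, Finset.mem_univ, if_true,
      Finset.sum_const, Finset.card_univ, Fintype.card_fin, nsmul_eq_mul] at htot
    rw [eq_div_iff hN1]
    apply mul_left_cancel₀ hN0
    linear_combination htot
  by_cases h1 : a = c ∧ b = d
  · obtain ⟨rfl, rfl⟩ := h1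
    rw [hab, hval]
    by_cases h : a = b
    · subst h; simp; ring
    · simp [h]
  · by_cases h2 : a = d ∧ b = c
    · obtain ⟨rfl, rfl⟩ := h2
      rw [hsym, hab, hval]
      by_cases h : a = b
      · subst h; simp at h1
      · simp [h]
    · rw [moment_eq_zero μ (by tauto)]
      simp [h1, h2]

end Haar

/-! ### Isolating one slot -/

section Slots

/-- The tensor power `A^{⊗J}` of a matrix, indexed by functions `J → m`. -/
def piKron {m : Type*} (J : Type*) [Fintype J] (A : Matrix m m ℂ) : Matrix (J → m) (J → m) ℂ :=
  Matrix.of fun p q => ∏ j, A (p j) (q j)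

lemma piKron_unitary {m J : Type*} [Fintype J] [DecidableEq J] [Fintype m] [DecidableEq m]
    {A : Matrix m m ℂ} (hA : Aᴴ * A = 1) : (piKron J A)ᴴ * piKron J A = 1 := by
  ext p q
  have h : ∀ j, ∑ x, star (A x (p j)) * A x (q j) = if p j = q j then 1 else 0 := fun j => by
    have := congrFun (congrFun hA (p j)) (q j)
    simpa [Matrix.mul_apply, Matrix.one_apply] using this
  simp only [piKron, Matrix.mul_apply, Matrix.conjTranspose_apply, Matrix.of_apply, star_prod,
    ← Finset.prod_mul_distrib]
  rw [← Fintype.piFinset_univ, ← Finset.prod_univ_sum (fun _ => univ)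
    (fun j x => star (A x (p j)) * A x (q j))]
  simp only [h, Matrix.one_apply, Finset.prod_ite_zero, Finset.prod_const_one, funext_iff,
    Finset.mem_univ, true_implies]

lemma kron_unitary {m n : Type*} [Fintype m] [DecidableEq m] [Fintype n] [DecidableEq n]
    {A : Matrix m m ℂ} {B : Matrix n n ℂ} (hA : Aᴴ * A = 1) (hB : Bᴴ * B = 1) :
    (A ⊗ₖ B)ᴴ * (A ⊗ₖ B) = 1 := by
  rw [Matrix.conjTranspose_kronecker, ← Matrix.mul_kronecker_mul, hA, hB, Matrix.one_kronecker_one]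

/-- Conjugating an operator `P ⊗ 1` by `X ⊗ U` with `U` unitary only conjugates `P` by `X`; the
equivalence `e` records how the index set splits into the two factors. -/
lemma slot_sandwich {ι m ρ : Type*} [Fintype ι] [Fintype m] [Fintype ρ]
    [DecidableEq ρ] (e : ι ≃ m × ρ) (X P : Matrix m m ℂ) {U : Matrix ρ ρ ℂ} (hU : Uᴴ * U = 1) :
    ((X ⊗ₖ U).submatrix e e)ᴴ * (P ⊗ₖ (1 : Matrix ρ ρ ℂ)).submatrix e e * (X ⊗ₖ U).submatrix e e =
      ((Xᴴ * P * X) ⊗ₖ (1 : Matrix ρ ρ ℂ)).submatrix e e := by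
  rw [Matrix.conjTranspose_submatrix, Matrix.submatrix_mul_equiv, Matrix.submatrix_mul_equiv,
    Matrix.conjTranspose_kronecker, ← Matrix.mul_kronecker_mul, ← Matrix.mul_kronecker_mul,
    mul_one, hU]

lemma opNorm_slot_le {ι m ρ : Type*} [Fintype ι] [DecidableEq ι] [Fintype m] [DecidableEq m]
    [Fintype ρ] [DecidableEq ρ] (e : ι ≃ m × ρ) {P : Matrix m m ℂ} (hP : IsStarProjection P) :
    opNorm ((P ⊗ₖ (1 : Matrix ρ ρ ℂ)).submatrix e e) ≤ 1 := by
  have h : IsStarProjection ((P ⊗ₖ (1 : Matrix ρ ρ ℂ)).submatrix e e) := by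
    constructor
    · rw [IsIdempotentElem, Matrix.submatrix_mul_equiv, ← Matrix.mul_kronecker_mul, mul_one,
        hP.isIdempotentElem.eq]
    · rw [IsSelfAdjoint, Matrix.star_eq_conjTranspose, Matrix.conjTranspose_submatrix,
        Matrix.conjTranspose_kronecker, Matrix.conjTranspose_one, ← Matrix.star_eq_conjTranspose,
        hP.isSelfAdjoint.star_eq]
  exact (h.map (Matrix.toEuclideanCLM (𝕜 := ℂ) (n := ι))).norm_le

variable {N : ℕ}

/-- The equality projector `∑ u, |u u⟩⟨u u|` on `ℂ^N ⊗ ℂ^N`. -/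
def pairEq (N : ℕ) : Matrix (Fin N × Fin N) (Fin N × Fin N) ℂ :=
  Matrix.diagonal fun x => if x.1 = x.2 then 1 else 0

/-- The projector onto the maximally entangled vector of `ℂ^N ⊗ ℂ^N`. -/
noncomputable def pairEPR (N : ℕ) : Matrix (Fin N × Fin N) (Fin N × Fin N) ℂ :=
  Matrix.of fun x y => if x.1 = x.2 ∧ y.1 = y.2 then (N : ℂ)⁻¹ else 0

/-- The projector `(I + SWAP) / 2` onto the symmetric subspace of `ℂ^N ⊗ ℂ^N`. -/
noncomputable def pairSym (N : ℕ) : Matrix (Fin N × Fin N) (Fin N × Fin N) ℂ :=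
  Matrix.of fun x y =>
    ((if x.1 = y.1 ∧ x.2 = y.2 then 1 else 0) + (if x.1 = y.2 ∧ x.2 = y.1 then 1 else 0)) / 2

lemma pairSym_proj (N : ℕ) : IsStarProjection (pairSym N) := by
  constructor
  · ext ⟨a, b⟩ ⟨c, d⟩
    simp only [pairSym, Matrix.mul_apply, Matrix.of_apply, Fintype.sum_prod_type]
    simp only [add_div, add_mul, mul_add, Finset.sum_add_distrib, ite_and, ite_div, zero_div,
      ite_mul, zero_mul, mul_ite, mul_zero, Finset.sum_ite_irrel, Finset.sum_const_zero]
    norm_num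
    split_ifs <;> norm_num
  · ext ⟨a, b⟩ ⟨c, d⟩
    simp only [pairSym, Matrix.star_apply, Matrix.of_apply]
    simp [eq_comm, and_comm]

lemma pairEPR_proj (hN : 1 ≤ N) : IsStarProjection (pairEPR N) := by
  have hN0 : (N : ℂ) ≠ 0 := by exact_mod_cast (by omega : N ≠ 0)
  constructor
  · ext ⟨a, b⟩ ⟨c, d⟩
    simp only [pairEPR, Matrix.mul_apply, Matrix.of_apply, Fintype.sum_prod_type]
    by_cases h1 : a = b <;> by_cases h2 : c = d <;> simp [h1, h2, hN0]
  · ext ⟨a, b⟩ ⟨c, d⟩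
    simp only [pairEPR, Matrix.star_apply, Matrix.of_apply]
    by_cases h1 : a = b <;> by_cases h2 : c = d <;> simp [h1, h2]

lemma sandwich_L (C : Matrix (Fin N) (Fin N) ℂ) (x y : Fin N × Fin N) :
    ((C ⊗ₖ C)ᴴ * pairEq N * (C ⊗ₖ C)) x y = fourth C x.1 x.2 y.1 y.2 := by
  rw [Matrix.mul_apply]
  simp only [pairEq, Matrix.mul_diagonal, Matrix.conjTranspose_apply,
    Matrix.kroneckerMap_apply, Fintype.sum_prod_type, fourth, star_mul']
  simp [mul_assoc]

lemma sandwich_R (C : Matrix (Fin N) (Fin N) ℂ) (x y : Fin N × Fin N) :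
    ((C ⊗ₖ C.map (starRingEnd ℂ))ᴴ * pairEq N * (C ⊗ₖ C.map (starRingEnd ℂ))) x y =
      fourth C x.1 y.2 x.2 y.1 := by
  rw [Matrix.mul_apply]
  simp only [pairEq, Matrix.mul_diagonal, Matrix.conjTranspose_apply,
    Matrix.kroneckerMap_apply, Fintype.sum_prod_type, fourth, star_mul']
  simp
  refine Finset.sum_congr rfl fun u _ => ?_
  ring

/-- The maximally entangled vector is invariant under `C ⊗ C̄`. -/
lemma sandwich_EPR {C : Matrix (Fin N) (Fin N) ℂ} (hC : Cᴴ * C = 1) :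
    (C ⊗ₖ C.map (starRingEnd ℂ))ᴴ * pairEPR N * (C ⊗ₖ C.map (starRingEnd ℂ)) = pairEPR N := by
  have h : ∀ a b, ∑ x, star (C x a) * C x b = if a = b then 1 else 0 := fun a b => by
    have := congrFun (congrFun hC a) b
    simpa [Matrix.mul_apply, Matrix.one_apply] using this
  have hv : pairEPR N = Matrix.vecMulVec (fun x => if x.1 = x.2 then (N : ℂ)⁻¹ else 0)
      (fun y => if y.1 = y.2 then 1 else 0) := by
    ext x y
    by_cases h1 : x.1 = x.2 <;> by_cases h2 : y.1 = y.2 <;>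
      simp [pairEPR, Matrix.vecMulVec_apply, h1, h2]
  rw [hv, Matrix.mul_vecMulVec, Matrix.vecMulVec_mul]
  congr 1
  · ext x
    simp only [Matrix.mulVec, dotProduct, Matrix.conjTranspose_apply, Matrix.kroneckerMap_apply,
      Fintype.sum_prod_type, star_mul', Matrix.map_apply, starRingEnd_apply, star_star, mul_ite,
      mul_zero, Finset.sum_ite_eq, Finset.mem_univ, if_true]
    rw [← Finset.sum_mul, h]
    simp
  · ext x
    simp only [Matrix.vecMul, dotProduct, Matrix.kroneckerMap_apply,
      Fintype.sum_prod_type, Matrix.map_apply, starRingEnd_apply, ite_mul, one_mul,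
      zero_mul, Finset.sum_ite_eq, Finset.mem_univ, if_true]
    simp_rw [mul_comm (C _ x.1), h, eq_comm]

/-- Splits the registers into the pair (query register, x-factor of the `i`-th L-slot) and the rest:
the y-factor of that slot, the other L-slots, and the R-slots. -/
def slotL (N ℓ r : ℕ) (i : Fin ℓ) : RegIdx N ℓ r ≃ (Fin N × Fin N) ×
    (Fin N × (({j : Fin ℓ // j ≠ i} → Fin N × Fin N) × (Fin r → Fin N × Fin N))) where
  toFun p := ((p.1, (p.2.1 i).1), ((p.2.1 i).2, ((fun j => p.2.1 j), p.2.2)))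
  invFun s := (s.1.1, (Equiv.funSplitAt i _).symm ((s.1.2, s.2.1), s.2.2.1), s.2.2.2)
  left_inv p := by
    refine Prod.ext rfl (Prod.ext ?_ rfl)
    exact (Equiv.funSplitAt i (Fin N × Fin N)).symm_apply_apply p.2.1
  right_inv s := by
    obtain ⟨⟨a, x⟩, y, f, g⟩ := s
    have h := (Equiv.funSplitAt i (Fin N × Fin N)).apply_symm_apply ((x, y), f)
    have h1 := congrArg Prod.fst h
    have h2 := congrArg Prod.snd h
    simp only [Equiv.funSplitAt_apply] at h1 h2
    simp only [h1, h2]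

/-- Splits the registers into the pair (query register, x-factor of the `i`-th R-slot) and the rest:
the y-factor of that slot, the L-slots, and the other R-slots. -/
def slotR (N ℓ r : ℕ) (i : Fin r) : RegIdx N ℓ r ≃ (Fin N × Fin N) ×
    (Fin N × ((Fin ℓ → Fin N × Fin N) × ({j : Fin r // j ≠ i} → Fin N × Fin N))) where
  toFun p := ((p.1, (p.2.2 i).1), ((p.2.2 i).2, (p.2.1, (fun j => p.2.2 j))))
  invFun s := (s.1.1, s.2.2.1, (Equiv.funSplitAt i _).symm ((s.1.2, s.2.1), s.2.2.2))
  left_inv p := by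
    refine Prod.ext rfl (Prod.ext rfl ?_)
    exact (Equiv.funSplitAt i (Fin N × Fin N)).symm_apply_apply p.2.2
  right_inv s := by
    obtain ⟨⟨a, x⟩, y, f, g⟩ := s
    have h := (Equiv.funSplitAt i (Fin N × Fin N)).apply_symm_apply ((x, y), g)
    have h1 := congrArg Prod.fst h
    have h2 := congrArg Prod.snd h
    simp only [Equiv.funSplitAt_apply] at h1 h2
    simp only [h1, h2]

lemma twirlOp_slotL (N ℓ r : ℕ) (i : Fin ℓ) (C D : Matrix (Fin N) (Fin N) ℂ) :
    twirlOp N ℓ r C D = ((C ⊗ₖ C) ⊗ₖ (Dᵀ ⊗ₖ (piKron {j : Fin ℓ // j ≠ i} (C ⊗ₖ Dᵀ) ⊗ₖ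
      piKron (Fin r) (C.map (starRingEnd ℂ) ⊗ₖ Dᴴ)))).submatrix
        (slotL N ℓ r i) (slotL N ℓ r i) := by
  ext p q
  simp only [twirlOp, slotL, piKron, Matrix.submatrix_apply, Matrix.kroneckerMap_apply,
    Matrix.of_apply, Equiv.coe_fn_mk, Matrix.transpose_apply, Matrix.map_apply,
    Matrix.conjTranspose_apply]
  rw [Fintype.prod_eq_mul_prod_subtype_ne _ i]
  simp only [starRingEnd_apply]
  ring

lemma twirlOp_slotR (N ℓ r : ℕ) (i : Fin r) (C D : Matrix (Fin N) (Fin N) ℂ) :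
    twirlOp N ℓ r C D = ((C ⊗ₖ C.map (starRingEnd ℂ)) ⊗ₖ (Dᴴ ⊗ₖ (piKron (Fin ℓ) (C ⊗ₖ Dᵀ) ⊗ₖ
      piKron {j : Fin r // j ≠ i} (C.map (starRingEnd ℂ) ⊗ₖ Dᴴ)))).submatrix
        (slotR N ℓ r i) (slotR N ℓ r i) := by
  ext p q
  simp only [twirlOp, slotR, piKron, Matrix.submatrix_apply, Matrix.kroneckerMap_apply,
    Matrix.of_apply, Equiv.coe_fn_mk, Matrix.transpose_apply, Matrix.map_apply,
    Matrix.conjTranspose_apply]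
  rw [Fintype.prod_eq_mul_prod_subtype_ne (fun j => (starRingEnd ℂ) (C (p.2.2 j).1 (q.2.2 j).1) *
        (starRingEnd ℂ) (D (q.2.2 j).2 (p.2.2 j).2)) i]
  simp only [starRingEnd_apply]
  ring

lemma eqProjL_slot (N ℓ r : ℕ) (i : Fin ℓ) :
    eqProjL N ℓ r i = (pairEq N ⊗ₖ 1).submatrix (slotL N ℓ r i) (slotL N ℓ r i) := by
  ext p q
  simp only [eqProjL, slotL, pairEq, Matrix.submatrix_apply, Matrix.kroneckerMap_apply,
    Matrix.of_apply, Equiv.coe_fn_mk, Matrix.diagonal_apply, Matrix.one_apply, Prod.ext_iff,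
    ← ite_and, mul_ite, mul_one, mul_zero]
  refine if_congr ?_ rfl rfl
  simp only [funext_iff, Subtype.forall, Prod.ext_iff]
  grind

lemma eqProjR_slot (N ℓ r : ℕ) (i : Fin r) :
    eqProjR N ℓ r i = (pairEq N ⊗ₖ 1).submatrix (slotR N ℓ r i) (slotR N ℓ r i) := by
  ext p q
  simp only [eqProjR, slotR, pairEq, Matrix.submatrix_apply, Matrix.kroneckerMap_apply,
    Matrix.of_apply, Equiv.coe_fn_mk, Matrix.diagonal_apply, Matrix.one_apply, Prod.ext_iff,
    ← ite_and, mul_ite, mul_one, mul_zero]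
  refine if_congr ?_ rfl rfl
  simp only [funext_iff, Subtype.forall, Prod.ext_iff]
  grind

lemma eprProjR_slot (N ℓ r : ℕ) (i : Fin r) :
    eprProjR N ℓ r i = (pairEPR N ⊗ₖ 1).submatrix (slotR N ℓ r i) (slotR N ℓ r i) := by
  ext p q
  simp only [eprProjR, slotR, pairEPR, Matrix.submatrix_apply, Matrix.kroneckerMap_apply,
    Matrix.of_apply, Equiv.coe_fn_mk, Matrix.one_apply, Prod.ext_iff,
    ← ite_and, mul_ite, mul_one, mul_zero]
  refine if_congr ?_ rfl rfl
  simp only [funext_iff, Subtype.forall, Prod.ext_iff]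
  grind

end Slots

/-! ### The averaged operator -/

lemma transpose_unitary {N : ℕ} {D : Matrix (Fin N) (Fin N) ℂ} (h : D * Dᴴ = 1) :
    (Dᵀ)ᴴ * Dᵀ = 1 := by
  have : (D * Dᴴ)ᵀ = 1 := by rw [h, Matrix.transpose_one]
  rwa [Matrix.transpose_mul] at this

lemma conj_unitary {N : ℕ} {C : Matrix (Fin N) (Fin N) ℂ} (h : Cᴴ * C = 1) :
    (C.map (starRingEnd ℂ))ᴴ * C.map (starRingEnd ℂ) = 1 := by
  have h1 : C.map (starRingEnd ℂ) = (Cᴴ)ᵀ := rfl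
  rw [h1]
  exact transpose_unitary (by rw [Matrix.conjTranspose_conjTranspose, h])

/-- Entries of the conjugated operator. They are free of `D`, and depend on `C` only through
fourth-order row sums; the factors `1 _ _` are the identity on the registers outside the pair. -/
lemma integrand_eq (N ℓ r : ℕ) (C D : Matrix.unitaryGroup (Fin N) ℂ) (p q : RegIdx N ℓ r) :
    (((twirlOp N ℓ r (C : Matrix (Fin N) (Fin N) ℂ) (D : Matrix (Fin N) (Fin N) ℂ))ᴴ *
      ((∑ i : Fin ℓ, eqProjL N ℓ r i) + ∑ i : Fin r, (eqProjR N ℓ r i - eprProjR N ℓ r i)) *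
        twirlOp N ℓ r (C : Matrix (Fin N) (Fin N) ℂ) (D : Matrix (Fin N) (Fin N) ℂ)) p q) =
    (∑ i : Fin ℓ, fourth (C : Matrix (Fin N) (Fin N) ℂ) p.1 (p.2.1 i).1 q.1 (q.2.1 i).1 *
        (1 : Matrix _ _ ℂ) (slotL N ℓ r i p).2 (slotL N ℓ r i q).2) +
    ∑ i : Fin r, (fourth (C : Matrix (Fin N) (Fin N) ℂ) p.1 (q.2.2 i).1 (p.2.2 i).1 q.1 -
        pairEPR N (slotR N ℓ r i p).1 (slotR N ℓ r i q).1) *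
        (1 : Matrix _ _ ℂ) (slotR N ℓ r i p).2 (slotR N ℓ r i q).2 := by
  have hC : (C : Matrix (Fin N) (Fin N) ℂ)ᴴ * C = 1 := Matrix.mem_unitaryGroup_iff'.1 C.2
  have hD : (D : Matrix (Fin N) (Fin N) ℂ) * (D : Matrix (Fin N) (Fin N) ℂ)ᴴ = 1 :=
    Matrix.mem_unitaryGroup_iff.1 D.2
  have hD' : (D : Matrix (Fin N) (Fin N) ℂ)ᴴᴴ * (D : Matrix (Fin N) (Fin N) ℂ)ᴴ = 1 := by
    rwa [Matrix.conjTranspose_conjTranspose]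
  have hDt := transpose_unitary hD
  have hCb := conj_unitary hC
  have hL : ∀ i, (twirlOp N ℓ r C D)ᴴ * eqProjL N ℓ r i * twirlOp N ℓ r C D =
      ((((C : Matrix (Fin N) (Fin N) ℂ) ⊗ₖ (C : Matrix (Fin N) (Fin N) ℂ))ᴴ * pairEq N *
        ((C : Matrix (Fin N) (Fin N) ℂ) ⊗ₖ (C : Matrix (Fin N) (Fin N) ℂ))) ⊗ₖ 1).submatrix
        (slotL N ℓ r i) (slotL N ℓ r i) := fun i => by
    rw [twirlOp_slotL N ℓ r i, eqProjL_slot]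
    exact slot_sandwich _ _ _ (kron_unitary hDt (kron_unitary (piKron_unitary
      (kron_unitary hC hDt)) (piKron_unitary (kron_unitary hCb hD'))))
  have hR : ∀ i (P : Matrix (Fin N × Fin N) (Fin N × Fin N) ℂ), (twirlOp N ℓ r C D)ᴴ *
      (P ⊗ₖ 1).submatrix (slotR N ℓ r i) (slotR N ℓ r i) * twirlOp N ℓ r C D =
      ((((C : Matrix (Fin N) (Fin N) ℂ) ⊗ₖ (C : Matrix (Fin N) (Fin N) ℂ).map (starRingEnd ℂ))ᴴ *
        P * ((C : Matrix (Fin N) (Fin N) ℂ) ⊗ₖ (C : Matrix (Fin N) (Fin N) ℂ).map (starRingEnd ℂ)))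
        ⊗ₖ 1).submatrix (slotR N ℓ r i) (slotR N ℓ r i) := fun i P => by
    rw [twirlOp_slotR N ℓ r i]
    exact slot_sandwich _ _ _ (kron_unitary hD' (kron_unitary (piKron_unitary
      (kron_unitary hC hDt)) (piKron_unitary (kron_unitary hCb hD'))))
  simp only [Matrix.mul_add, Matrix.add_mul, Matrix.mul_sum, Matrix.sum_mul, Matrix.mul_sub,
    hL, eqProjR_slot, eprProjR_slot, hR, sandwich_EPR hC, Matrix.add_apply,
    Matrix.sum_apply, Matrix.sub_apply, Matrix.submatrix_apply, Matrix.kroneckerMap_apply,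
    sandwich_L, sandwich_R, sub_mul]
  rfl

/-- **Two-design twirling bound.** For the normalized Haar probability measure `μ` on
`U(N)` (characterized as a left-invariant probability measure),
`‖ ∫∫ T[C,D]† (Σ_i Π^eq_{L,i} + Σ_i (Π^eq_{R,i} − Π^EPR_{R,i})) T[C,D] dμ(C) dμ(D) ‖ ≤
(2ℓ+r)/(N+1)`. -/
theorem two_design_twirling_bound (N ℓ r : ℕ) (hN : 1 ≤ N)
    (μ : Measure (Matrix.unitaryGroup (Fin N) ℂ)) [IsProbabilityMeasure μ]
    (hinv : ∀ V : Matrix.unitaryGroup (Fin N) ℂ, μ.map (fun U => V * U) = μ) :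
    opNorm (Matrix.of fun p q : RegIdx N ℓ r =>
        ∫ C, ∫ D,
          (((twirlOp N ℓ r (C : Matrix (Fin N) (Fin N) ℂ)
                (D : Matrix (Fin N) (Fin N) ℂ))ᴴ *
              ((∑ i : Fin ℓ, eqProjL N ℓ r i) +
                ∑ i : Fin r, (eqProjR N ℓ r i - eprProjR N ℓ r i)) *
              twirlOp N ℓ r (C : Matrix (Fin N) (Fin N) ℂ)
                (D : Matrix (Fin N) (Fin N) ℂ)) p q) ∂μ ∂μ) ≤
      (2 * (ℓ : ℝ) + r) / ((N : ℝ) + 1) := by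
  have hleft : μ.IsMulLeftInvariant := ⟨hinv⟩
  have hright : μ.IsMulRightInvariant := right_invariant μ
  have hN1 : (N : ℂ) + 1 ≠ 0 := by exact_mod_cast Nat.succ_ne_zero N
  have hN0 : (N : ℂ) ≠ 0 := by exact_mod_cast (by omega : N ≠ 0)
  have hmat : (Matrix.of fun p q : RegIdx N ℓ r =>
        ∫ C, ∫ D,
          (((twirlOp N ℓ r (C : Matrix (Fin N) (Fin N) ℂ)
                (D : Matrix (Fin N) (Fin N) ℂ))ᴴ *
              ((∑ i : Fin ℓ, eqProjL N ℓ r i) +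
                ∑ i : Fin r, (eqProjR N ℓ r i - eprProjR N ℓ r i)) *
              twirlOp N ℓ r (C : Matrix (Fin N) (Fin N) ℂ)
                (D : Matrix (Fin N) (Fin N) ℂ)) p q) ∂μ ∂μ) =
      (∑ i : Fin ℓ, (2 / ((N : ℂ) + 1)) •
        (pairSym N ⊗ₖ 1).submatrix (slotL N ℓ r i) (slotL N ℓ r i)) +
      ∑ i : Fin r, (1 / ((N : ℂ) + 1)) •
        ((1 - pairEPR N) ⊗ₖ 1).submatrix (slotR N ℓ r i) (slotR N ℓ r i) := by
    ext p q
    simp only [Matrix.of_apply, integrand_eq, integral_const, probReal_univ, one_smul]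
    have hIL := fun i : Fin ℓ =>
      (integrable_fourth μ p.1 (p.2.1 i).1 q.1 (q.2.1 i).1).mul_const
        ((1 : Matrix _ _ ℂ) (slotL N ℓ r i p).2 (slotL N ℓ r i q).2)
    have hIR : ∀ i : Fin r, Integrable (fun C : Matrix.unitaryGroup (Fin N) ℂ =>
        (fourth (C : Matrix (Fin N) (Fin N) ℂ) p.1 (q.2.2 i).1 (p.2.2 i).1 q.1 -
          pairEPR N (slotR N ℓ r i p).1 (slotR N ℓ r i q).1) *
        (1 : Matrix _ _ ℂ) (slotR N ℓ r i p).2 (slotR N ℓ r i q).2) μ := fun i =>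
      ((integrable_fourth μ p.1 (q.2.2 i).1 (p.2.2 i).1 q.1).sub
        (integrable_const (pairEPR N (slotR N ℓ r i p).1 (slotR N ℓ r i q).1))).mul_const _
    rw [integral_add (integrable_finsetSum _ fun i _ => hIL i)
      (integrable_finsetSum _ fun i _ => hIR i), integral_finsetSum _ fun i _ => hIL i,
      integral_finsetSum _ fun i _ => hIR i]
    simp only [Matrix.add_apply, Matrix.sum_apply, Matrix.smul_apply, Matrix.submatrix_apply,
      Matrix.kroneckerMap_apply, smul_eq_mul, Matrix.sub_apply]
    congr 1
    · refine Finset.sum_congr rfl fun i _ => ?_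
      rw [integral_mul_const, ← mul_assoc]
      congr 1
      refine (moment_eq hN μ _ _ _ _).trans ?_
      simp only [pairSym, slotL, Matrix.of_apply, Equiv.coe_fn_mk]
      field_simp
    · refine Finset.sum_congr rfl fun i _ => ?_
      rw [integral_mul_const, ← mul_assoc]
      congr 1
      rw [integral_sub (integrable_fourth μ _ _ _ _) (integrable_const _), integral_const,
        probReal_univ, one_smul]
      refine (congrArg (· - _) (moment_eq hN μ _ _ _ _)).trans ?_
      simp only [pairEPR, slotR, Matrix.of_apply, Equiv.coe_fn_mk, Matrix.one_apply, Prod.ext_iff]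
      -- `(δ + N · EPR) / (N + 1) - EPR = (δ - EPR) / (N + 1)`, checked entrywise.
      have h1 : (p.1 = (p.2.2 i).1 ∧ (q.2.2 i).1 = q.1) ↔
        (p.1 = (p.2.2 i).1 ∧ q.1 = (q.2.2 i).1) := by grind
      have h2 : (p.1 = q.1 ∧ (q.2.2 i).1 = (p.2.2 i).1) ↔
        (p.1 = q.1 ∧ (p.2.2 i).1 = (q.2.2 i).1) := by grind
      simp only [h1, h2]
      split_ifs <;> field_simp <;> ring
  rw [hmat]
  have hn : (0 : ℝ) < (N : ℝ) + 1 := by positivity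
  have hnorm2 : ‖(2 / ((N : ℂ) + 1))‖ = 2 / ((N : ℝ) + 1) := by
    have : (2 / ((N : ℂ) + 1)) = ((2 / ((N : ℝ) + 1) : ℝ) : ℂ) := by push_cast; rfl
    rw [this, Complex.norm_real, Real.norm_of_nonneg (by positivity)]
  have hnorm1 : ‖(1 / ((N : ℂ) + 1))‖ = 1 / ((N : ℝ) + 1) := by
    have : (1 / ((N : ℂ) + 1)) = ((1 / ((N : ℝ) + 1) : ℝ) : ℂ) := by push_cast; rfl
    rw [this, Complex.norm_real, Real.norm_of_nonneg (by positivity)]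
  unfold opNorm
  simp only [map_add, map_sum, map_smul]
  calc _ ≤ (∑ i : Fin ℓ, 2 / ((N : ℝ) + 1)) + ∑ i : Fin r, 1 / ((N : ℝ) + 1) := by
        refine (norm_add_le _ _).trans (add_le_add ?_ ?_)
        · refine (norm_sum_le _ _).trans (Finset.sum_le_sum fun i _ => ?_)
          rw [norm_smul, hnorm2]
          exact mul_le_of_le_one_right (by positivity) (opNorm_slot_le _ (pairSym_proj N))
        · refine (norm_sum_le _ _).trans (Finset.sum_le_sum fun i _ => ?_)
          rw [norm_smul, hnorm1]
          exact mul_le_of_le_one_right (by positivity)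
            (opNorm_slot_le _ (pairEPR_proj hN).one_sub)
    _ = (2 * (ℓ : ℝ) + r) / ((N : ℝ) + 1) := by
        simp only [Finset.sum_const, Finset.card_univ, Fintype.card_fin, nsmul_eq_mul]
        ring
end
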